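/- Let ρ ∈ (0,1], θ > 0, and let ν be a Γ-grey noise measure on S' with parameters ρ, θ. Then for every ξ ∈ S and n ∈ ℕ: ∫_{S'} ⟨ω,ξ⟩^{2n+1} dν(ω) = 0, and for every integer n ≥ 1, ∫_{S'} ⟨ω,ξ⟩^{2n} dν(ω) = (-1)^{n+1} (2n)! Γ(ρ) θ^{ρ-n} ‖ξ‖^{2n} E^ρ_{1,ρ+1-n}(-θ) / (n! 2^n Γ(ρ,θ)). -/

import Mathlib

open MeasureTheory Real Set

/-- Upper incomplete gamma function `Γ(ρ, x) = ∫_x^∞ e^{-w} w^{ρ-1} dw`. -/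
noncomputable def uGamma (ρ x : ℝ) : ℝ := ∫ w in Set.Ioi x, Real.exp (-w) * w ^ (ρ - 1)

/-- Three-parameter (Prabhakar) Mittag-Leffler function `E^γ_{α,β}(z)`. -/
noncomputable def prabhakar (α β γ z : ℝ) : ℝ :=
  ∑' j : ℕ, (Real.Gamma (γ + j) / Real.Gamma γ) * z ^ j
      / ((j.factorial : ℝ) * Real.Gamma (α * j + β))

/-- The space `S'`: the topological dual of the Schwartz space `S(ℝ)`,
equipped with the weak-* topology. -/
abbrev SchwartzDual := WeakDual ℝ (SchwartzMap ℝ ℝ)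

/-- Borel σ-algebra on `S'` (Borel σ-algebra of the weak-* topology). -/
noncomputable instance : MeasurableSpace SchwartzDual := borel _

instance : BorelSpace SchwartzDual := ⟨rfl⟩

/-!
Along a ray `t ↦ t ξ` the characteristic functional is `F (c t²)`, where `c = ‖ξ‖² / 2` and
`F u = Γ(ρ, θ + u) / Γ(ρ, θ)` is smooth near `[0, ∞)`. Smoothness of the characteristic function
at the origin forces all moments of `⟨ω, ξ⟩` to exist: Fatou's lemma for the second difference
quotients gives the second moment, and the same argument for the measures `x^(2n) μ(dx)` gives the
others. The moments are therefore read off from the Taylor coefficients of `F (c t²)`; the odd ones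
vanish, the even ones are multiples of `F⁽ⁿ⁾(0)`. Since `d/dx Γ(ρ, x) = -x^(ρ-1) e^(-x)` and
`e^(-x) = Γ(ρ) E^ρ_{1,ρ}(-x)`, the higher derivatives follow from the rule
`d/dx [x^(β-1) E^γ_{1,β}(-x)] = x^(β-2) E^γ_{1,β-1}(-x)`.
-/

open Filter Topology Asymptotics
open scoped Nat

section NormedSpace

variable {E : Type*} [NormedAddCommGroup E] [NormedSpace ℝ E]

lemma hasDerivAt_integral_Ioi [CompleteSpace E] {f : ℝ → E} {a x : ℝ}
    (hf : IntegrableOn f (Ioi a)) (hax : a < x)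
    (hfm : StronglyMeasurableAtFilter f (𝓝 x)) (hfx : ContinuousAt f x) :
    HasDerivAt (fun y ↦ ∫ w in Ioi y, f w) (-f x) x := by
  have hint : IntervalIntegrable f volume a x :=
    (intervalIntegrable_iff_integrableOn_Ioc_of_le hax.le).2 (hf.mono_set Ioc_subset_Ioi_self)
  refine ((intervalIntegral.integral_hasDerivAt_right hint hfm hfx).const_sub
    (∫ w in Ioi a, f w)).congr_of_eventuallyEq ?_
  filter_upwards [Ioi_mem_nhds hax] with y hy
  rw [← intervalIntegral.integral_Ioi_sub_Ioi hf (le_of_lt hy), sub_sub_cancel]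

lemma tendsto_second_difference {f : ℝ → E} (hf : ContDiff ℝ 2 f) (x : ℝ) :
    Tendsto (fun h : ℝ ↦ (h ^ 2)⁻¹ • (f (x + h) + f (x - h) - (2 : ℝ) • f x)) (𝓝[≠] 0)
      (𝓝 (iteratedDeriv 2 f x)) := by
  have taylor : (fun h : ℝ ↦ f (x + h) - taylorWithinEval f 2 univ x (x + h))
      =o[𝓝 0] fun h ↦ h ^ 2 := by
    have hx : Tendsto (fun h ↦ x + h) (𝓝 0) (𝓝 x) :=
      (continuous_const_add x).tendsto' 0 x (add_zero x)
    simpa [Function.comp_def] using! (taylor_isLittleO_univ (n := 2) hf).comp_tendsto hx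
  have taylor_neg := taylor.comp_tendsto (continuous_neg.tendsto' (0 : ℝ) 0 neg_zero)
  have sum : (fun h : ℝ ↦ f (x + h) + f (x - h) - (2 : ℝ) • f x - h ^ 2 • iteratedDeriv 2 f x)
      =o[𝓝 0] fun h ↦ h ^ 2 := by
    refine (taylor.add (taylor_neg.congr_right fun h ↦ neg_sq h)).congr_left fun h ↦ ?_
    simp only [taylor_within_apply, Finset.sum_range_succ, Function.comp_apply,
      iteratedDerivWithin_univ, ← sub_eq_add_neg]
    simp only [Finset.range_zero, Finset.sum_empty, zero_add, add_sub_cancel_left,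
      sub_sub_cancel_left, iteratedDeriv_zero, pow_zero, pow_one, Nat.factorial, Nat.cast_one,
      inv_one]
    module
  have quotient := (sum.tendsto_inv_smul_nhds_zero.mono_left
    (nhdsWithin_le_nhds (s := {0}ᶜ))).add_const (iteratedDeriv 2 f x)
  rw [zero_add] at quotient
  refine quotient.congr' ?_
  filter_upwards [self_mem_nhdsWithin] with h hh
  rw [smul_sub, inv_smul_smul₀ (pow_ne_zero 2 hh), sub_add_cancel]

/-- `F` is a sequence of functions each of which is, on `s`, the derivative of its predecessor,
so `F m` is the `m`-th derivative of `F 0` on `s`. The derivative is two-sided even at points of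
the boundary of `s`. -/
def IsDerivSeqOn (F : ℕ → ℝ → E) (s : Set ℝ) : Prop :=
  ∀ m, ∀ u ∈ s, HasDerivAt (F m) (F (m + 1) u) u

namespace IsDerivSeqOn

variable {F : ℕ → ℝ → E} {s : Set ℝ} {c : ℝ}

lemma succ (hF : IsDerivSeqOn F s) : IsDerivSeqOn (fun m ↦ F (m + 1)) s :=
  fun m ↦ hF (m + 1)

lemma hasDerivAt_comp_mul_sq (hF : IsDerivSeqOn F (Ici 0)) (hc : 0 ≤ c) (t : ℝ) :
    HasDerivAt (fun t ↦ F 0 (c * t ^ 2)) ((2 * c * t) • F 1 (c * t ^ 2)) t := by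
  have inner : HasDerivAt (fun t ↦ c * t ^ 2) (2 * c * t) t :=
    ((hasDerivAt_pow 2 t).const_mul c).congr_deriv (by push_cast; ring)
  exact (hF 0 _ (mem_Ici.2 (by positivity))).scomp t inner

open scoped ContDiff in
lemma contDiff_comp_mul_sq (hF : IsDerivSeqOn F (Ici 0)) (hc : 0 ≤ c) :
    ContDiff ℝ ∞ (fun t ↦ F 0 (c * t ^ 2)) := by
  refine contDiff_infty.2 fun n ↦ ?_
  induction n generalizing F with
  | zero =>
    exact contDiff_zero.2
      (continuous_iff_continuousAt.2 fun t ↦ (hF.hasDerivAt_comp_mul_sq hc t).continuousAt)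
  | succ n ih =>
    refine (contDiff_succ_iff_deriv (n := n)).2
      ⟨fun t ↦ (hF.hasDerivAt_comp_mul_sq hc t).differentiableAt, by simp, ?_⟩
    rw [funext fun t ↦ (hF.hasDerivAt_comp_mul_sq hc t).deriv]
    exact (contDiff_const.mul contDiff_id).smul (ih hF.succ)

-- With `D = d/du`, the second derivative of `t ↦ G (c t²)` is `(2 c D + 4 c u D²) G` at `u = c t²`;
-- the `m`-th member of the new sequence is `Dᵐ (2 c D + 4 c u D²) (F 0)`.
lemma secondDeriv_comp_mul_sq (hF : IsDerivSeqOn F s) (c : ℝ) :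
    IsDerivSeqOn (fun m u ↦ (2 * c * (2 * m + 1)) • F (m + 1) u + (4 * c * u) • F (m + 2) u) s := by
  intro m u hu
  have linear : HasDerivAt (fun u ↦ 4 * c * u) (4 * c) u := hasDerivAt_const_mul _
  refine (((hF (m + 1) u hu).const_smul (2 * c * (2 * m + 1))).add
    (linear.smul (hF (m + 2) u hu))).congr_deriv ?_
  push_cast
  module

lemma deriv_deriv_comp_mul_sq (hF : IsDerivSeqOn F (Ici 0)) (hc : 0 ≤ c) :
    deriv (deriv fun t ↦ F 0 (c * t ^ 2))
      = fun t ↦ (2 * c) • F 1 (c * t ^ 2) + (4 * c * (c * t ^ 2)) • F 2 (c * t ^ 2) := by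
  ext t
  have linear : HasDerivAt (fun t ↦ 2 * c * t) (2 * c) t := hasDerivAt_const_mul _
  rw [funext fun t ↦ (hF.hasDerivAt_comp_mul_sq hc t).deriv,
    (linear.fun_smul (hF.succ.hasDerivAt_comp_mul_sq hc t)).deriv]
  module

lemma iteratedDeriv_comp_mul_sq_zero (hF : IsDerivSeqOn F (Ici 0)) (hc : 0 ≤ c) (n : ℕ) :
    iteratedDeriv (2 * n) (fun t ↦ F 0 (c * t ^ 2)) 0
      = ((2 * n)! / n ! * c ^ n : ℝ) • F n 0 := by
  induction n generalizing F with
  | zero => simp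
  | succ n ih =>
    have step := ih (hF.secondDeriv_comp_mul_sq c)
    rw [mul_add_one, iteratedDeriv_succ', iteratedDeriv_succ', hF.deriv_deriv_comp_mul_sq hc]
    simp only [Nat.cast_zero, mul_zero, zero_add, mul_one, zero_smul, add_zero, smul_smul] at step
    rw [step]
    congr 1
    push_cast [Nat.factorial_succ]
    field_simp
    ring

end IsDerivSeqOn

end NormedSpace

/-! ### The Prabhakar function with `α = 1` -/

lemma inv_Gamma_eq_mul_inv_Gamma_add_one (s : ℝ) : (Gamma s)⁻¹ = s * (Gamma (s + 1))⁻¹ := by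
  rcases eq_or_ne s 0 with rfl | hs
  · simp
  · rw [Gamma_add_one hs, mul_inv, mul_inv_cancel_left₀ hs]

lemma hasDerivAt_tsum_mul_pow {a : ℕ → ℝ}
    (ha : ∀ r : ℝ, Summable fun j : ℕ ↦ (j + 1) * a (j + 1) * r ^ j) (z : ℝ) :
    HasDerivAt (fun z ↦ ∑' j, a j * z ^ j) (∑' j : ℕ, (j + 1) * a (j + 1) * z ^ j) z := by
  have bound_summable (r : ℝ) : Summable fun j : ℕ ↦ |a j * (j * r ^ (j - 1))| := by
    refine Summable.abs ((summable_nat_add_iff 1).1 ((ha r).congr fun j ↦ ?_))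
    push_cast [Nat.add_sub_cancel]
    ring
  have deriv_bound (j : ℕ) (y : ℝ) (hy : y ∈ Metric.ball 0 (|z| + 1)) :
      ‖a j * (j * y ^ (j - 1))‖ ≤ |a j * (j * (|z| + 1) ^ (j - 1))| := by
    have hy' : |y| ≤ |(|z| + 1)| :=
      (mem_ball_zero_iff.1 hy).le.trans (le_abs_self _)
    simp only [norm_eq_abs, abs_mul, abs_pow]
    gcongr
  have summable_zero : Summable fun j ↦ a j * (0 : ℝ) ^ j :=
    summable_of_ne_finset_zero (s := {0}) fun j hj ↦ by
      rw [zero_pow (by simpa using hj), mul_zero]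
  refine (hasDerivAt_tsum_of_isPreconnected (bound_summable (|z| + 1)) Metric.isOpen_ball
    (convex_ball 0 _).isPreconnected (fun j y _ ↦ (hasDerivAt_pow j y).const_mul (a j))
    deriv_bound (Metric.mem_ball_self (by positivity)) summable_zero (by simp)).congr_deriv ?_
  rw [(bound_summable z).of_abs.tsum_eq_zero_add]
  simp only [CharP.cast_eq_zero, zero_mul, mul_zero, zero_add, Nat.add_sub_cancel]
  exact tsum_congr fun j ↦ by push_cast; ring

/-- The coefficient of `z ^ j` in the Prabhakar function `E^γ_{1,β}(z)`. -/
noncomputable def prabhakarCoeff (β γ : ℝ) (j : ℕ) : ℝ :=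
  Gamma (γ + j) / Gamma γ / (j.factorial * Gamma (j + β))

lemma prabhakar_one_eq_tsum (β γ z : ℝ) :
    prabhakar 1 β γ z = ∑' j, prabhakarCoeff β γ j * z ^ j :=
  tsum_congr fun j ↦ by rw [prabhakarCoeff, one_mul]; ring

lemma mul_prabhakarCoeff (β γ : ℝ) (j : ℕ) :
    (j + β - 1) * prabhakarCoeff β γ j = prabhakarCoeff (β - 1) γ j := by
  have h := inv_Gamma_eq_mul_inv_Gamma_add_one (j + β - 1)
  rw [sub_add_cancel] at h
  simp only [prabhakarCoeff, div_eq_mul_inv, mul_inv, ← add_sub_assoc, h]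
  ring

lemma succ_mul_prabhakarCoeff_succ (β γ : ℝ) (j : ℕ) :
    (j + 1) * prabhakarCoeff β γ (j + 1) = γ * prabhakarCoeff (β + 1) (γ + 1) j := by
  have hγ : (Gamma γ)⁻¹ = γ * (Gamma (γ + 1))⁻¹ := inv_Gamma_eq_mul_inv_Gamma_add_one γ
  have hj : (j : ℝ) + 1 ≠ 0 := by positivity
  simp only [prabhakarCoeff, div_eq_mul_inv, mul_inv, hγ, Nat.factorial_succ]
  push_cast
  rw [show γ + (j + 1) = γ + 1 + j by ring, show (j : ℝ) + 1 + β = j + (β + 1) by ring]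
  field_simp

lemma eventually_prabhakarCoeff_succ (β γ : ℝ) :
    ∀ᶠ j : ℕ in atTop, prabhakarCoeff β γ (j + 1)
      = (γ + j) / ((j + 1) * (j + β)) * prabhakarCoeff β γ j := by
  filter_upwards [tendsto_natCast_atTop_atTop.eventually_gt_atTop (-γ),
    tendsto_natCast_atTop_atTop.eventually_gt_atTop (-β)] with j hjγ hjβ
  have hγ : γ + j ≠ 0 := by linarith
  have hβ : (j : ℝ) + β ≠ 0 := by linarith
  simp only [prabhakarCoeff, Nat.factorial_succ]
  push_cast
  rw [← add_assoc, Gamma_add_one hγ, add_right_comm, Gamma_add_one hβ]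
  field_simp

lemma tendsto_prabhakarCoeff_ratio (β γ : ℝ) :
    Tendsto (fun j : ℕ ↦ (γ + j) / ((j + 1) * (j + β))) atTop (𝓝 0) := by
  have quotient : Tendsto (fun j : ℕ ↦ (γ + 1 * (j : ℝ)) / (β + 1 * j)) atTop (𝓝 (1 / 1)) :=
    tendsto_add_mul_div_add_mul_atTop_nhds γ β 1 one_ne_zero
  have product := (tendsto_one_div_add_atTop_nhds_zero_nat (𝕜 := ℝ)).mul quotient
  rw [zero_mul] at product
  refine product.congr fun j ↦ ?_
  rw [div_mul_div_comm, one_mul, one_mul, add_comm β]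

lemma summable_prabhakarCoeff_mul_pow (β γ z : ℝ) :
    Summable fun j ↦ prabhakarCoeff β γ j * z ^ j := by
  have ratio : Tendsto (fun j : ℕ ↦ ‖(γ + j) / ((j + 1) * (j + β)) * z‖) atTop (𝓝 0) := by
    simpa using ((tendsto_prabhakarCoeff_ratio β γ).mul_const z).norm
  refine summable_of_ratio_norm_eventually_le one_half_lt_one ?_
  filter_upwards [eventually_prabhakarCoeff_succ β γ, ratio.eventually_le_const one_half_pos]
    with j hj hratio
  calc ‖prabhakarCoeff β γ (j + 1) * z ^ (j + 1)‖
      = ‖(γ + j) / ((j + 1) * (j + β)) * z‖ * ‖prabhakarCoeff β γ j * z ^ j‖ := by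
        rw [hj, ← norm_mul]; ring_nf
    _ ≤ 1 / 2 * ‖prabhakarCoeff β γ j * z ^ j‖ := by gcongr

lemma hasDerivAt_prabhakar_one (β γ z : ℝ) :
    HasDerivAt (prabhakar 1 β γ) (γ * prabhakar 1 (β + 1) (γ + 1) z) z := by
  have h := hasDerivAt_tsum_mul_pow (a := prabhakarCoeff β γ) (fun r ↦ by
    simpa only [succ_mul_prabhakarCoeff_succ, mul_assoc] using
      (summable_prabhakarCoeff_mul_pow (β + 1) (γ + 1) r).mul_left γ) z
  simp only [succ_mul_prabhakarCoeff_succ, mul_assoc, tsum_mul_left] at h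
  rw [prabhakar_one_eq_tsum]
  exact h.congr_of_eventuallyEq (.of_forall (prabhakar_one_eq_tsum β γ))

lemma prabhakar_one_sub_one (β γ z : ℝ) :
    prabhakar 1 (β - 1) γ z
      = (β - 1) * prabhakar 1 β γ z + z * (γ * prabhakar 1 (β + 1) (γ + 1) z) := by
  have summable_scaled := (summable_prabhakarCoeff_mul_pow β γ z).mul_left (β - 1)
  have summable_shifted : Summable fun j : ℕ ↦ j * (prabhakarCoeff β γ j * z ^ j) := by
    refine ((summable_prabhakarCoeff_mul_pow (β - 1) γ z).sub summable_scaled).congr fun j ↦ ?_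
    rw [← mul_prabhakarCoeff]
    ring
  have shifted : z * (γ * prabhakar 1 (β + 1) (γ + 1) z)
      = ∑' j : ℕ, j * (prabhakarCoeff β γ j * z ^ j) := by
    rw [summable_shifted.tsum_eq_zero_add, prabhakar_one_eq_tsum, ← tsum_mul_left,
      ← tsum_mul_left, Nat.cast_zero, zero_mul, zero_add]
    refine tsum_congr fun j ↦ ?_
    rw [← mul_assoc γ, ← succ_mul_prabhakarCoeff_succ]
    push_cast
    ring
  rw [shifted, prabhakar_one_eq_tsum, prabhakar_one_eq_tsum, ← tsum_mul_left,
    ← summable_scaled.tsum_add summable_shifted]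
  refine tsum_congr fun j ↦ ?_
  rw [← mul_prabhakarCoeff]
  ring

lemma prabhakar_one_self {γ : ℝ} (hγ : ∀ m : ℕ, γ ≠ -m) (z : ℝ) :
    prabhakar 1 γ γ z = exp z / Gamma γ := by
  have coeff (j : ℕ) : prabhakarCoeff γ γ j * z ^ j = z ^ j / j.factorial / Gamma γ := by
    have hj : Gamma (γ + j) ≠ 0 := Gamma_ne_zero fun m h ↦
      hγ (m + j) (by push_cast; linarith)
    rw [prabhakarCoeff, add_comm (j : ℝ)]
    field_simp
  simp only [prabhakar_one_eq_tsum, coeff, tsum_div_const, exp_eq_exp_ℝ,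
    NormedSpace.exp_eq_tsum_div]

lemma hasDerivAt_rpow_mul_prabhakar_one (β γ l : ℝ) {x : ℝ} (hx : 0 < x) :
    HasDerivAt (fun x ↦ x ^ (β - 1) * prabhakar 1 β γ (l * x))
      (x ^ (β - 2) * prabhakar 1 (β - 1) γ (l * x)) x := by
  have hpow : HasDerivAt (fun x : ℝ ↦ x ^ (β - 1)) ((β - 1) * x ^ (β - 1 - 1)) x :=
    hasDerivAt_rpow_const (.inl hx.ne')
  have hE := (hasDerivAt_prabhakar_one β γ (l * x)).comp x (hasDerivAt_const_mul l)
  refine (hpow.mul hE).congr_deriv ?_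
  have rpow_eq : x ^ (β - 1) = x ^ (β - 2) * x := by
    rw [← rpow_add_one hx.ne']; ring_nf
  rw [prabhakar_one_sub_one, rpow_eq, show β - 1 - 1 = β - 2 by ring, Function.comp_apply]
  ring

/-! ### Derivatives of the incomplete gamma function -/

lemma integrableOn_exp_neg_mul_rpow_Ioi (ρ : ℝ) {a : ℝ} (ha : 0 < a) :
    IntegrableOn (fun w ↦ exp (-w) * w ^ (ρ - 1)) (Ioi a) := by
  refine integrable_of_isBigO_exp_neg one_half_pos ?_ (Gamma_integrand_isLittleO (ρ - 1)).isBigO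
  exact (Real.continuous_exp.comp continuous_neg).continuousOn.mul
    (continuousOn_id.rpow_const fun w hw ↦ .inl (ha.trans_le hw).ne')

lemma hasDerivAt_uGamma (ρ : ℝ) {x : ℝ} (hx : 0 < x) :
    HasDerivAt (uGamma ρ) (-(exp (-x) * x ^ (ρ - 1))) x := by
  have continuousAt : ContinuousAt (fun w ↦ exp (-w) * w ^ (ρ - 1)) x :=
    (Real.continuous_exp.comp continuous_neg).continuousAt.mul
      (continuousAt_id.rpow_const (.inl hx.ne'))
  have measurable : Measurable fun w : ℝ ↦ exp (-w) * w ^ (ρ - 1) := by fun_prop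
  exact hasDerivAt_integral_Ioi (integrableOn_exp_neg_mul_rpow_Ioi ρ (half_pos hx))
    (half_lt_self hx) measurable.stronglyMeasurable.stronglyMeasurableAtFilter continuousAt

/-- The closed form of the `n`-th derivative of `Γ(ρ, ·)` on the positive half-line, valid when `ρ`
is not a pole of `Γ`: for `n ≥ 1` it is `-Γ(ρ) x ^ (ρ - n) E^ρ_{1,ρ+1-n}(-x)`. -/
noncomputable def uGammaDeriv (ρ : ℝ) : ℕ → ℝ → ℝ
  | 0, x => uGamma ρ x
  | n + 1, x => -Gamma ρ * (x ^ (ρ - (n + 1)) * prabhakar 1 (ρ - n) ρ (-x))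

lemma isDerivSeqOn_uGammaDeriv {ρ : ℝ} (hρ : ∀ m : ℕ, ρ ≠ -m) :
    IsDerivSeqOn (uGammaDeriv ρ) (Ioi 0) := by
  intro n x hx
  cases n with
  | zero =>
    refine (hasDerivAt_uGamma ρ hx).congr_deriv ?_
    simp only [uGammaDeriv, Nat.cast_zero, sub_zero, zero_add, prabhakar_one_self hρ]
    field_simp [Gamma_ne_zero hρ]
  | succ n =>
    have h := (hasDerivAt_rpow_mul_prabhakar_one (ρ - n) ρ (-1) hx).const_mul (-Gamma ρ)
    simp only [neg_one_mul, sub_sub] at h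
    refine h.congr_deriv ?_
    simp only [uGammaDeriv, Nat.cast_succ, add_assoc, one_add_one_eq_two]

lemma isDerivSeqOn_uGammaDeriv_const_add_div {ρ θ : ℝ} (hρ : ∀ m : ℕ, ρ ≠ -m) (hθ : 0 < θ)
    (a : ℝ) : IsDerivSeqOn (fun m u ↦ uGammaDeriv ρ m (θ + u) / a) (Ici 0) := fun m u hu ↦
  ((isDerivSeqOn_uGammaDeriv hρ m (θ + u) (add_pos_of_pos_of_nonneg hθ hu)).comp_const_add
    θ u).div_const a

/-! ### Moments and smoothness of the characteristic function -/

lemma re_charFun (μ : Measure ℝ) [IsFiniteMeasure μ] (t : ℝ) :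
    (charFun μ t).re = ∫ x, cos (t * x) ∂μ := by
  have exp_integrable : Integrable (fun x : ℝ ↦ Complex.exp (t * x * Complex.I)) μ := by
    refine .of_bound (C := 1) (by fun_prop) (ae_of_all _ fun x ↦ ?_)
    rw [← Complex.ofReal_mul, Complex.norm_exp_ofReal_mul_I]
  rw [charFun_apply_real, ← RCLike.re_eq_complex_re, ← integral_re exp_integrable]
  refine integral_congr_ae (ae_of_all _ fun x ↦ ?_)
  simp only [RCLike.re_eq_complex_re, ← Complex.ofReal_mul, Complex.exp_ofReal_mul_I_re]

lemma integral_two_sub_two_mul_cos (μ : Measure ℝ) [IsFiniteMeasure μ] (h : ℝ) :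
    ∫ x, (2 - 2 * cos (h * x)) ∂μ = 2 * (charFun μ 0).re - 2 * (charFun μ h).re := by
  have cos_integrable : Integrable (fun x ↦ 2 * cos (h * x)) μ :=
    .of_bound (C := 2) (by fun_prop) (ae_of_all _ fun x ↦ by
      simpa [abs_mul] using abs_cos_le_one (h * x))
  rw [integral_sub (integrable_const _) cos_integrable, integral_const_mul, re_charFun, re_charFun]
  simp [mul_comm]

lemma tendsto_two_sub_two_mul_cos_div_sq (x : ℝ) :
    Tendsto (fun h : ℝ ↦ (h ^ 2)⁻¹ * (2 - 2 * cos (h * x))) (𝓝[≠] 0) (𝓝 (x ^ 2)) := by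
  have second_deriv : iteratedDeriv 2 (fun t ↦ cos (x * t)) 0 = -x ^ 2 := by
    simp [iteratedDeriv_comp_const_mul contDiff_cos]
  have limit := (tendsto_second_difference (f := fun t ↦ cos (x * t)) (by fun_prop) 0).neg
  rw [second_deriv, neg_neg] at limit
  refine limit.congr fun h ↦ ?_
  simp only [zero_add, zero_sub, mul_comm x, neg_mul, cos_neg, zero_mul, cos_zero, smul_eq_mul]
  ring

lemma tendsto_integral_two_sub_two_mul_cos_div_sq {μ : Measure ℝ} [IsFiniteMeasure μ]
    (hμ : ContDiff ℝ 2 (charFun μ)) :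
    Tendsto (fun h : ℝ ↦ ∫ x, (h ^ 2)⁻¹ * (2 - 2 * cos (h * x)) ∂μ) (𝓝[≠] 0)
      (𝓝 (-iteratedDeriv 2 (fun t ↦ (charFun μ t).re) 0)) := by
  refine (tendsto_second_difference (Complex.reCLM.contDiff.comp hμ) 0).neg.congr fun h ↦ ?_
  simp only [integral_const_mul, integral_two_sub_two_mul_cos, Function.comp_apply, zero_add,
    zero_sub, charFun_neg, Complex.reCLM_apply, Complex.conj_re, smul_eq_mul]
  ring

-- Fatou's lemma applied to `(2 - 2 cos (h x)) / h ^ 2 → x ^ 2`.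
lemma integrable_sq_of_contDiff_charFun {μ : Measure ℝ} [IsFiniteMeasure μ]
    (hμ : ContDiff ℝ 2 (charFun μ)) : Integrable (fun x ↦ x ^ 2) μ := by
  let G (h x : ℝ) : ℝ := (h ^ 2)⁻¹ * (2 - 2 * cos (h * x))
  have G_nonneg (h x : ℝ) : 0 ≤ G h x :=
    mul_nonneg (by positivity) (by linarith [cos_le_one (h * x)])
  have G_integrable (h : ℝ) : Integrable (G h) μ := by
    refine .of_bound (C := (h ^ 2)⁻¹ * 4) (by fun_prop) (ae_of_all _ fun x ↦ ?_)
    rw [norm_of_nonneg (G_nonneg h x)]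
    exact mul_le_mul_of_nonneg_left (by linarith [neg_one_le_cos (h * x)]) (by positivity)
  have lintegral_G (h : ℝ) : ∫⁻ x, ‖G h x‖ₑ ∂μ = ENNReal.ofReal (∫ x, G h x ∂μ) := by
    rw [← ofReal_integral_norm_eq_lintegral_enorm (G_integrable h)]
    simp only [norm_of_nonneg (G_nonneg h _)]
  obtain ⟨u, hu⟩ := exists_seq_tendsto (𝓝[≠] (0 : ℝ))
  have integral_limit := (tendsto_integral_two_sub_two_mul_cos_div_sq hμ).comp hu
  refine integrable_of_tendsto
    (ae_of_all _ fun x ↦ (tendsto_two_sub_two_mul_cos_div_sq x).comp hu)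
    (fun n ↦ (G_integrable (u n)).aestronglyMeasurable) ?_
  change liminf (fun n ↦ ∫⁻ x, ‖G (u n) x‖ₑ ∂μ) atTop ≠ ⊤
  simp only [lintegral_G]
  exact (ENNReal.tendsto_ofReal integral_limit).liminf_eq.trans_ne ENNReal.ofReal_ne_top

section Moments

variable {μ : Measure ℝ} [IsFiniteMeasure μ]

lemma memLp_id_two_mul_iff_integrable_pow {n : ℕ} :
    MemLp id (2 * n : ℕ) μ ↔ Integrable (fun x ↦ x ^ (2 * n)) μ := by
  rcases eq_or_ne n 0 with rfl | hn
  · simp [aestronglyMeasurable_id]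
  · rw [← integrable_norm_rpow_iff (by fun_prop) (by simp [hn]) (ENNReal.natCast_ne_top _)]
    simp only [ENNReal.toReal_natCast, rpow_natCast, id, norm_eq_abs, (even_two_mul n).pow_abs]

lemma charFun_withDensity_pow {n : ℕ} (hn : MemLp id (2 * n : ℕ) μ) :
    charFun (μ.withDensity fun x ↦ ENNReal.ofReal (x ^ (2 * n)))
      = fun t ↦ (-1) ^ n * iteratedDeriv (2 * n) (charFun μ) t := by
  ext t
  rw [iteratedDeriv_charFun hn, charFun_apply_real,
    integral_withDensity_eq_integral_toReal_smul (by fun_prop) (ae_of_all _ fun _ ↦ by simp),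
    pow_mul, Complex.I_sq, ← mul_assoc, ← mul_pow, neg_one_mul, neg_neg, one_pow, one_mul]
  refine integral_congr_ae (ae_of_all _ fun x ↦ ?_)
  simp only [ENNReal.toReal_ofReal ((even_two_mul n).pow_nonneg x), Complex.real_smul,
    Complex.ofReal_pow]

-- The inductive step applies the second-moment case to the measure `x ^ (2 * n) ∂μ`.
lemma memLp_id_of_contDiff_charFun {n : ℕ} (hμ : ContDiff ℝ (2 * n : ℕ) (charFun μ)) :
    MemLp id (2 * n : ℕ) μ := by
  induction n with
  | zero => simp [aestronglyMeasurable_id]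
  | succ n ih =>
    have memLp : MemLp id (2 * n : ℕ) μ := ih (hμ.of_le (by gcongr; lia))
    let μₙ := μ.withDensity fun x ↦ ENNReal.ofReal (x ^ (2 * n))
    have : IsFiniteMeasure μₙ :=
      isFiniteMeasure_withDensity_ofReal (memLp_id_two_mul_iff_integrable_pow.1 memLp).2
    have charFun_contDiff : ContDiff ℝ 2 (charFun μₙ) := by
      rw [charFun_withDensity_pow memLp, iteratedDeriv_eq_iterate]
      exact contDiff_const.mul (ContDiff.iterate_deriv' 2 (2 * n) (by rwa [add_comm 2]))
    have integrable_sq := integrable_sq_of_contDiff_charFun charFun_contDiff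
    rw [integrable_withDensity_iff_integrable_smul' (by fun_prop) (ae_of_all _ fun _ ↦ by simp)]
      at integrable_sq
    refine memLp_id_two_mul_iff_integrable_pow.2 (integrable_sq.congr (ae_of_all _ fun x ↦ ?_))
    simp only [ENNReal.toReal_ofReal ((even_two_mul n).pow_nonneg x), smul_eq_mul]
    ring

open scoped ContDiff in
lemma memLp_id_of_contDiff_infty_charFun (hμ : ContDiff ℝ ∞ (charFun μ)) (n : ℕ) :
    MemLp id n μ :=
  (memLp_id_of_contDiff_charFun (contDiff_infty.1 hμ (2 * n))).mono_exponent
    (by gcongr; lia)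

lemma integral_pow_odd_eq_zero {n : ℕ} (hn : MemLp id (2 * n + 1 : ℕ) μ)
    (heven : ∀ t, charFun μ (-t) = charFun μ t) : ∫ x, x ^ (2 * n + 1) ∂μ = 0 := by
  have deriv_zero : iteratedDeriv (2 * n + 1) (charFun μ) 0 = 0 := by
    have h := iteratedDeriv_comp_neg (2 * n + 1) (charFun μ) 0
    rw [funext heven, neg_zero, Odd.neg_one_pow ⟨n, rfl⟩, neg_smul, one_smul] at h
    exact self_eq_neg.1 h
  rw [iteratedDeriv_charFun_zero hn] at deriv_zero
  simpa using deriv_zero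

variable {F : ℕ → ℝ → ℝ} {c : ℝ}

lemma IsDerivSeqOn.ofReal {s : Set ℝ} (hF : IsDerivSeqOn F s) :
    IsDerivSeqOn (fun m u ↦ (F m u : ℂ)) s :=
  fun m u hu ↦ (hF m u hu).ofReal_comp

lemma memLp_id_of_charFun_eq_comp_mul_sq (hF : IsDerivSeqOn F (Ici 0)) (hc : 0 ≤ c)
    (hμ : ∀ t, charFun μ t = F 0 (c * t ^ 2)) (n : ℕ) : MemLp id n μ :=
  memLp_id_of_contDiff_infty_charFun (funext hμ ▸ hF.ofReal.contDiff_comp_mul_sq hc) n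

lemma integral_pow_even_of_charFun_eq_comp_mul_sq (hF : IsDerivSeqOn F (Ici 0)) (hc : 0 ≤ c)
    (hμ : ∀ t, charFun μ t = F 0 (c * t ^ 2)) (n : ℕ) :
    ∫ x, x ^ (2 * n) ∂μ = (-1) ^ n * ((2 * n)! / n ! * c ^ n * F n 0) := by
  have moment := iteratedDeriv_charFun_zero (memLp_id_of_charFun_eq_comp_mul_sq hF hc hμ (2 * n))
  rw [funext hμ, hF.ofReal.iteratedDeriv_comp_mul_sq_zero hc, pow_mul, Complex.I_sq,
    Complex.real_smul] at moment
  have moment_real : (2 * n)! / n ! * c ^ n * F n 0 = (-1) ^ n * ∫ x, x ^ (2 * n) ∂μ := by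
    exact_mod_cast moment
  rw [moment_real, ← mul_assoc, ← mul_pow, neg_one_mul, neg_neg, one_pow, one_mul]

end Moments

lemma charFun_map_eq_integral {Ω : Type*} [MeasurableSpace Ω] {P : Measure Ω} {X : Ω → ℝ}
    (hX : AEMeasurable X P) (t : ℝ) :
    charFun (P.map X) t = ∫ ω, Complex.exp (Complex.I * ((t * X ω : ℝ) : ℂ)) ∂P := by
  rw [charFun_apply_real, integral_map hX (by fun_prop)]
  simp only [Complex.ofReal_mul, mul_comm Complex.I]

theorem stmt_10_general {Ω : Type*} [MeasurableSpace Ω] {P : Measure Ω} [IsFiniteMeasure P]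
    {X : Ω → ℝ} (hX : AEMeasurable X P) {ρ θ s : ℝ} (hρ : ∀ m : ℕ, ρ ≠ -m) (hθ : 0 < θ)
    (hs : 0 ≤ s)
    (hchar : ∀ t : ℝ, ∫ ω, Complex.exp (Complex.I * ((t * X ω : ℝ) : ℂ)) ∂P
      = ((uGamma ρ (θ + t ^ 2 * s / 2) / uGamma ρ θ : ℝ) : ℂ)) :
    (∀ n : ℕ, Integrable (fun ω ↦ X ω ^ n) P) ∧
    (∀ n : ℕ, ∫ ω, X ω ^ (2 * n + 1) ∂P = 0) ∧
    ∀ n : ℕ, 1 ≤ n → ∫ ω, X ω ^ (2 * n) ∂P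
      = (-1) ^ (n + 1) * (2 * n)! * Gamma ρ * θ ^ (ρ - n) * s ^ n * prabhakar 1 (ρ + 1 - n) ρ (-θ)
        / (n ! * 2 ^ n * uGamma ρ θ) := by
  let F (m : ℕ) (u : ℝ) : ℝ := uGammaDeriv ρ m (θ + u) / uGamma ρ θ
  have hF : IsDerivSeqOn F (Ici 0) := isDerivSeqOn_uGammaDeriv_const_add_div hρ hθ _
  have hs' : 0 ≤ s / 2 := by positivity
  have charFun_map (t : ℝ) : charFun (P.map X) t = F 0 (s / 2 * t ^ 2) := by
    rw [charFun_map_eq_integral hX, hchar, mul_comm (t ^ 2), mul_div_right_comm]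
    rfl
  have memLp (n : ℕ) : MemLp id n (P.map X) :=
    memLp_id_of_charFun_eq_comp_mul_sq hF hs' charFun_map n
  have integral_pow (n : ℕ) : ∫ ω, X ω ^ n ∂P = ∫ x, x ^ n ∂P.map X :=
    (integral_map hX (continuous_pow n).aestronglyMeasurable).symm
  refine ⟨fun n ↦ ?_, fun n ↦ ?_, fun n hn ↦ ?_⟩
  · refine (integrable_norm_iff (hX.pow_const n).aestronglyMeasurable).1 ?_
    simpa only [norm_pow, id, Function.comp_apply] using!
      ((memLp n).comp_of_map hX).integrable_norm_pow'
  · rw [integral_pow]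
    exact integral_pow_odd_eq_zero (memLp _) fun t ↦ by simp only [charFun_map, neg_sq]
  · obtain ⟨k, rfl⟩ := Nat.exists_eq_add_of_le' hn
    rw [integral_pow, integral_pow_even_of_charFun_eq_comp_mul_sq hF hs' charFun_map]
    simp only [F, uGammaDeriv, add_zero, Nat.cast_succ, add_sub_add_right_eq_sub, div_pow]
    field_simp
    ring

lemma integral_smul_mul_smul (t : ℝ) (ξ : SchwartzMap ℝ ℝ) :
    ∫ x, (t • ξ) x * (t • ξ) x = t ^ 2 * ∫ x, ξ x * ξ x := by
  simp only [smul_apply, smul_eq_mul, mul_mul_mul_comm t, integral_const_mul, sq]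

theorem stmt_10 (ρ θ : ℝ) (hρ : ρ ∈ Set.Ioc (0 : ℝ) 1) (hθ : 0 < θ)
    (ν : Measure SchwartzDual) [IsProbabilityMeasure ν]
    (hchar : ∀ ξ : SchwartzMap ℝ ℝ,
        ∫ ω, Complex.exp (Complex.I * ((ω ξ : ℝ) : ℂ)) ∂ν
          = ((uGamma ρ (θ + (∫ x, ξ x * ξ x) / 2) / uGamma ρ θ : ℝ) : ℂ)) :
    (∀ ξ : SchwartzMap ℝ ℝ, ∀ n : ℕ, ∫ ω, (ω ξ) ^ (2 * n + 1) ∂ν = 0) ∧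
    (∀ ξ : SchwartzMap ℝ ℝ, ∀ n : ℕ, 1 ≤ n →
      ∫ ω, (ω ξ) ^ (2 * n) ∂ν
        = (-1 : ℝ) ^ (n + 1) * ((2 * n).factorial : ℝ) * Real.Gamma ρ * θ ^ (ρ - (n : ℝ))
            * (∫ x, ξ x * ξ x) ^ n * prabhakar 1 (ρ + 1 - n) ρ (-θ)
            / ((n.factorial : ℝ) * 2 ^ n * uGamma ρ θ)) := by
  have hρ' (m : ℕ) : ρ ≠ -m := ((neg_nonpos.2 m.cast_nonneg).trans_lt hρ.1).ne'
  have moments (ξ : SchwartzMap ℝ ℝ) := stmt_10_general (P := ν) (X := fun ω ↦ ω ξ)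
    (s := ∫ x, ξ x * ξ x) (WeakDual.eval_continuous ξ).measurable.aemeasurable hρ' hθ
    (integral_nonneg fun x ↦ mul_self_nonneg (ξ x))
    fun t ↦ by simpa only [map_smul, smul_eq_mul, integral_smul_mul_smul] using hchar (t • ξ)
  exact ⟨fun ξ ↦ (moments ξ).2.1, fun ξ ↦ (moments ξ).2.2⟩
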